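/- arXiv:1610.02165 — 2 statements merged into one kernel-verified Lean document; each statement's English description precedes it below -/
import Mathlib

section
/- Let A be a finite-dimensional unital C*-algebra and S an operator system with A = C*(S). Then every irreducible representation of A is a weak boundary representation for S; that is, the weak Choquet boundary ∂_W S equals the spectrum Â of A. -/
/-!
An irreducible representation `π` of a finite-dimensional `A` acts on a finite-dimensional space:
for `x ≠ 0` the subspace `π(A)x` is finite-dimensional and reducing, so its orthogonal projection
commutes with `π(A)`, hence is a scalar; it fixes `x`, so it is the identity and `π(A)x = H`
(`IsIrreducibleRep.finiteDimensional`).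

An isometry `V` of a finite-dimensional space is unitary, so `V*π(s)V = π(s)` says that `V`
commutes with `π(s)`. The elements `a` for which `π(a)` commutes with both `V` and `V*` form a
closed star-subalgebra of `A`; it contains `S`, hence is all of `A`.
-/

noncomputable section

/-- A representation is *irreducible* if the space is nontrivial and the commutant of its
range consists of scalars. -/
def IsIrreducibleRep {A : Type*} [Semiring A] [Algebra ℂ A] [Star A]
    {H : Type*} [NormedAddCommGroup H] [InnerProductSpace ℂ H] [CompleteSpace H]
    (π : A →⋆ₐ[ℂ] (H →L[ℂ] H)) : Prop :=
  Nontrivial H ∧ ∀ T : H →L[ℂ] H, (∀ a : A, T * π a = π a * T) →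
    ∃ c : ℂ, T = c • (1 : H →L[ℂ] H)

/-- The defining property of a weak boundary representation (no irreducibility assumed):
the only UCP map of the form `V*π(·)V`, `V` an isometry, agreeing with `π` on `S` is `π`. -/
def WeakBoundaryRel {A : Type*} [Semiring A] [Algebra ℂ A] [Star A]
    {H : Type*} [NormedAddCommGroup H] [InnerProductSpace ℂ H] [CompleteSpace H]
    (S : Set A) (π : A →⋆ₐ[ℂ] (H →L[ℂ] H)) : Prop :=
  ∀ V : H →L[ℂ] H, star V * V = 1 →
    (∀ s ∈ S, star V * π s * V = π s) → ∀ a : A, star V * π a * V = π a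

universe u w

/-- If `M` is invariant under `T` and `T*`, its orthogonal projection commutes with `T`. -/
lemma starProjection_commute_of_invariant {H : Type*} [NormedAddCommGroup H]
    [InnerProductSpace ℂ H] [CompleteSpace H] (M : Submodule ℂ H) [M.HasOrthogonalProjection]
    (T : H →L[ℂ] H) (hT : ∀ m ∈ M, T m ∈ M) (hT' : ∀ m ∈ M, (star T) m ∈ M) :
    M.starProjection * T = T * M.starProjection := by
  ext h
  change M.starProjection (T h) = T (M.starProjection h)
  refine Submodule.eq_starProjection_of_mem_of_inner_eq_zero
    (hT _ (Submodule.starProjection_apply_mem M h)) fun w hw => ?_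
  rw [← map_sub, ← ContinuousLinearMap.adjoint_inner_right]
  exact Submodule.starProjection_inner_eq_zero h _ (hT' w hw)

lemma IsIrreducibleRep.finiteDimensional {A : Type*} [Ring A] [Algebra ℂ A] [Star A]
    [FiniteDimensional ℂ A] {H : Type*} [NormedAddCommGroup H] [InnerProductSpace ℂ H]
    [CompleteSpace H] {π : A →⋆ₐ[ℂ] (H →L[ℂ] H)} (hπ : IsIrreducibleRep π) :
    FiniteDimensional ℂ H := by
  obtain ⟨hH, hcomm⟩ := hπ
  obtain ⟨x, hx⟩ := exists_ne (0 : H)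
  let f : A →ₗ[ℂ] H :=
    { toFun := fun a => π a x
      map_add' := fun a b => by simp
      map_smul' := fun c a => by simp }
  have hinv : ∀ a : A, ∀ m ∈ LinearMap.range f, π a m ∈ LinearMap.range f := by
    rintro a _ ⟨b, rfl⟩
    exact ⟨a * b, by simp [f]⟩
  obtain ⟨c, hc⟩ := hcomm (LinearMap.range f).starProjection fun a =>
    starProjection_commute_of_invariant _ (π a) (hinv a) (by
      rw [← map_star]
      exact hinv (star a))
  have hxM : x ∈ LinearMap.range f := ⟨1, by simp [f]⟩
  have hfix := Submodule.starProjection_eq_self_iff.mpr hxM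
  have hc1 : c = 1 := by
    rw [hc] at hfix
    have h0 : (c - 1) • x = 0 := by
      rw [sub_smul, one_smul, sub_eq_zero]
      simpa using hfix
    exact sub_eq_zero.mp ((smul_eq_zero.mp h0).resolve_right hx)
  refine Module.Finite.of_surjective f fun y => ?_
  have hy := Submodule.starProjection_apply_mem (LinearMap.range f) y
  rw [hc, hc1] at hy
  simpa using hy

/-- If `A = C*(S)` is a finite-dimensional unital C*-algebra and `S` an
operator system generating it, then every irreducible representation of `A` is a weak
boundary representation for `S`; that is, the weak Choquet boundary of `S` is all of the
spectrum of `A`. -/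
theorem finiteDimensional_all_irreducible_weakBoundary
    {A : Type u} [NormedRing A] [StarRing A] [CStarRing A] [CompleteSpace A]
    [NormedAlgebra ℂ A] [StarModule ℂ A] [FiniteDimensional ℂ A]
    (S : Submodule ℂ A) (h1 : (1 : A) ∈ S) (hsa : ∀ s ∈ S, star s ∈ S)
    (hgen : (StarAlgebra.adjoin ℂ (S : Set A)).topologicalClosure = ⊤) :
    ∀ (H : Type w) [NormedAddCommGroup H] [InnerProductSpace ℂ H] [CompleteSpace H]
      (π : A →⋆ₐ[ℂ] (H →L[ℂ] H)), IsIrreducibleRep π →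
      WeakBoundaryRel (S : Set A) π := by
  intro H _ _ _ π hπ V hV hS
  have : FiniteDimensional ℂ H := hπ.finiteDimensional
  have hV' : V * star V = 1 := by
    have h : (star V).toLinearMap * V.toLinearMap = 1 := by
      ext x
      exact congrArg (fun T : H →L[ℂ] H => T x) hV
    ext x
    exact congrArg (fun T : H →ₗ[ℂ] H => T x) (mul_eq_one_comm.mp h)
  -- The centralizer of `V` and `V*`, pulled back along `π`.
  let C : StarSubalgebra ℂ A := (StarSubalgebra.centralizer ℂ {V}).comap π
  have hmem : ∀ a, a ∈ C → V * π a = π a * V := fun a ha =>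
    (StarSubalgebra.mem_centralizer_iff ℂ).mp ha V rfl |>.1
  have hSC : (S : Set A) ⊆ C := by
    intro s hs
    have key : ∀ t ∈ S, V * π t = π t * V := fun t ht => by
      calc V * π t = V * (star V * π t * V) := by rw [hS t ht]
        _ = (V * star V) * π t * V := by simp only [mul_assoc]
        _ = π t * V := by rw [hV', one_mul]
    refine (StarSubalgebra.mem_centralizer_iff ℂ).mpr ?_
    rintro _ rfl
    refine ⟨key s hs, ?_⟩
    have h := congrArg star (key (star s) (hsa s hs))
    simpa [map_star] using h.symm
  have hclosed : IsClosed (C : Set A) :=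
    Submodule.closed_of_finiteDimensional (Subalgebra.toSubmodule C.toSubalgebra)
  have htop : (⊤ : StarSubalgebra ℂ A) ≤ C := hgen ▸
    StarSubalgebra.topologicalClosure_minimal (StarAlgebra.adjoin_le hSC) hclosed
  intro a
  rw [mul_assoc, ← hmem a (htop trivial), ← mul_assoc, hV, one_mul]

end
end

section
/- Let A be a unital C*-algebra, H a complex Hilbert space, Φ : A → B(H) a unital positive linear map satisfying the Schwarz inequality Φ(a)*Φ(a) ≤ Φ(a*a) for all a ∈ A, π : A → B(H) a unital *-homomorphism, and P an orthogonal projection on H commuting with π(a) for every a ∈ A, such that PΦ(a)P = π(a)P for all a ∈ A. Then (1−P)Φ(a)P = 0 for all a ∈ A, and consequently P commutes with Φ(a) for every a ∈ A. -/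
noncomputable section

universe u v

/-!
Write `T = (1 - P) Φ(a) P`. Compressing the Schwarz inequality by `P`, and using that
`P Φ(a⋆a) P = π(a)⋆π(a) P = (P Φ(a) P)⋆ (P Φ(a) P)`, gives `0 ≤ -T⋆T`, so `T = 0`. Thus
`Φ(a) P = P Φ(a) P` for every `a`. Since `Φ` is star-preserving (`map_star_of_pos`), taking
adjoints of this identity at `a⋆` gives `P Φ(a) = P Φ(a) P` as well.
-/

/-- Positivity implies star-preservation: expanding `Φ((1 + b)⋆(1 + b))` shows that
`Φ(b) + Φ(b⋆)` is self-adjoint, and taking `b = a` and `b = i a` yields the claim. -/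
lemma map_star_of_pos
    {A : Type u} [Ring A] [StarRing A] [Algebra ℂ A] [StarModule ℂ A]
    {H : Type v} [NormedAddCommGroup H] [InnerProductSpace ℂ H] [CompleteSpace H]
    (Φ : A →ₗ[ℂ] (H →L[ℂ] H))
    (hpos : ∀ a : A, (∃ b : A, a = star b * b) → (Φ a).IsPositive) (a : A) :
    Φ (star a) = star (Φ a) := by
  have hsq : ∀ b : A, star (Φ (star b * b)) = Φ (star b * b) := fun b =>
    (hpos _ ⟨b, rfl⟩).isSelfAdjoint.star_eq
  have hadd : ∀ b : A, star (Φ b) + star (Φ (star b)) = Φ b + Φ (star b) := by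
    intro b
    have h := hsq (1 + b)
    have h1 := hsq 1
    have h2 := hsq b
    have e : star (1 + b) * (1 + b) = star 1 * 1 + b + star b + star b * b := by
      simp only [star_add, star_one]; noncomm_ring
    rw [e] at h
    simp only [map_add, star_add, h1, h2] at h
    have h3 := add_right_cancel h
    rwa [add_assoc, add_assoc, add_right_inj] at h3
  have h1 := hadd a
  have h2 := hadd (Complex.I • a)
  simp only [star_smul, map_smul, Complex.star_def, Complex.conj_I, neg_smul, map_neg,
    star_neg, neg_neg] at h2
  have h3 : star (Φ (star a)) - star (Φ a) = Φ a - Φ (star a) := by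
    apply smul_right_injective _ Complex.I_ne_zero
    simp only [smul_sub]
    rw [sub_eq_add_neg, sub_eq_add_neg, ← h2, add_comm]
  have h4 : (2 : ℂ) • Φ (star a) = (2 : ℂ) • star (Φ a) := by
    rw [two_smul, two_smul]
    calc _ = (Φ a + Φ (star a)) - (Φ a - Φ (star a)) := by abel
      _ = _ := by rw [← h1, ← h3]; abel
  exact smul_right_injective _ (two_ne_zero : (2 : ℂ) ≠ 0) h4

/-- Let `Φ : A → B(H)` be a unital positive linear map satisfying the
Schwarz inequality `Φ(a)*Φ(a) ≤ Φ(a*a)`, let `π : A → B(H)` be a unital *-homomorphism and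
`P` an orthogonal projection commuting with every `π(a)` such that `PΦ(a)P = π(a)P` for
all `a`.  Then `(1 - P)Φ(a)P = 0` for all `a`, and consequently `P` commutes with every
`Φ(a)`. -/
theorem projection_commutes_of_schwarz
    {A : Type u} [NormedRing A] [StarRing A] [CStarRing A] [CompleteSpace A]
    [NormedAlgebra ℂ A] [StarModule ℂ A]
    {H : Type v} [NormedAddCommGroup H] [InnerProductSpace ℂ H] [CompleteSpace H]
    (Φ : A →ₗ[ℂ] (H →L[ℂ] H)) (hunital : Φ 1 = 1)
    (hpos : ∀ a : A, (∃ b : A, a = star b * b) → (Φ a).IsPositive)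
    (hschwarz : ∀ a : A, (Φ (star a * a) - star (Φ a) * Φ a).IsPositive)
    (π : A →⋆ₐ[ℂ] (H →L[ℂ] H))
    (P : H →L[ℂ] H) (hsa : star P = P) (hidem : P * P = P)
    (hcomm : ∀ a : A, P * π a = π a * P)
    (hcompress : ∀ a : A, P * Φ a * P = π a * P) :
    (∀ a : A, (1 - P) * Φ a * P = 0) ∧ ∀ a : A, P * Φ a = Φ a * P := by
  have hzero : ∀ a : A, (1 - P) * Φ a * P = 0 := by
    intro a
    rw [← CStarRing.star_mul_self_eq_zero_iff]
    refine le_antisymm ?_ (star_mul_self_nonneg _)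
    have hS : 0 ≤ star P * (Φ (star a * a) - star (Φ a) * Φ a) * P :=
      star_left_conjugate_nonneg
        ((ContinuousLinearMap.nonneg_iff_isPositive _).2 (hschwarz a)) P
    have hmul : P * Φ (star a * a) * P = star (P * Φ a * P) * (P * Φ a * P) := by
      rw [hcompress, hcompress, map_mul, map_star, star_mul, hsa]
      have hc : P * star (π a) = star (π a) * P := by rw [← map_star, hcomm]
      rw [hc, mul_assoc, mul_assoc, ← mul_assoc P, hcomm, mul_assoc, hidem]
    have key : star P * (Φ (star a * a) - star (Φ a) * Φ a) * P
        = -(star ((1 - P) * Φ a * P) * ((1 - P) * Φ a * P)) := by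
      rw [hsa, mul_sub, sub_mul, hmul]
      have hQ : (1 - P) * (1 - P) = 1 - P := by
        rw [mul_sub, sub_mul, sub_mul, hidem]; simp
      have e1 : star (P * Φ a * P) * (P * Φ a * P) = P * star (Φ a) * (P * P) * Φ a * P := by
        simp only [star_mul, hsa, mul_assoc]
      have e2 : star ((1 - P) * Φ a * P) * ((1 - P) * Φ a * P)
          = P * star (Φ a) * ((1 - P) * (1 - P)) * Φ a * P := by
        simp only [star_mul, star_sub, star_one, hsa, mul_assoc]
      rw [e1, e2, hQ, hidem]
      noncomm_ring
    rw [key] at hS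
    exact neg_nonneg.1 hS
  refine ⟨hzero, fun a => ?_⟩
  have hright : ∀ b : A, Φ b * P = P * Φ b * P := fun b => by
    have h := hzero b
    rwa [sub_mul, sub_mul, one_mul, sub_eq_zero] at h
  have h := congrArg star (hright (star a))
  simp only [map_star_of_pos Φ hpos, star_mul, star_star, hsa] at h
  rw [h, ← mul_assoc, ← hright]

end
end
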